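/- Let A be a reduced commutative algebra essentially of finite type over a field k, B its normalization, and I a conducting ideal. Then for all sufficiently large n, the natural map I^n·Ω^1_{A/k} → I^n·Ω^1_{B/k} (induced by Ω^1_{A/k} → Ω^1_{B/k}) is injective. -/

import Mathlib

/-!
Inverting an element `f` of `A` that multiplies `B` into `A` identifies the localizations of `A`
and `B`, so `Ω[A⁄k]_f = Ω[B⁄k]_f` and every element of the kernel of `Ω[A⁄k] → Ω[B⁄k]` is killed
by a power of `f`. The kernel is finitely generated, hence killed by a power of the contraction `J`
of the conducting ideal, and by the Artin-Rees lemma `J ^ n • Ω[A⁄k]` meets it inside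
`J ^ (n - c)` times the kernel.
-/

section Module

variable {A M : Type*} [CommRing A] [AddCommGroup M] [Module A M]

theorem mem_radical_annihilator_iff [Module.Finite A M] {f : A} :
    f ∈ (Module.annihilator A M).radical ↔ ∀ x : M, ∃ n : ℕ, f ^ n • x = 0 :=
  calc f ∈ (Module.annihilator A M).radical
      ↔ Module.support A M ⊆ PrimeSpectrum.zeroLocus {f} := by
        rw [Module.support_eq_zeroLocus, PrimeSpectrum.subset_zeroLocus_iff_subset_vanishingIdeal,
          PrimeSpectrum.vanishingIdeal_zeroLocus_eq_radical, Set.singleton_subset_iff,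
          SetLike.mem_coe]
    _ ↔ Subsingleton (LocalizedModule.Away f M) :=
        LocalizedModule.subsingleton_iff_support_subset.symm
    _ ↔ ∀ x : M, ∃ n : ℕ, f ^ n • x = 0 := by
        simp only [LocalizedModule.subsingleton_iff, Submonoid.mem_powers_iff,
          exists_exists_eq_and]

theorem exists_forall_ge_disjoint_pow_smul_top [IsNoetherianRing A] [Module.Finite A M]
    {J : Ideal A} {N : Submodule A M} (hJN : J ≤ N.annihilator.radical) :
    ∃ n₀ : ℕ, ∀ n ≥ n₀, Disjoint (J ^ n • (⊤ : Submodule A M)) N := by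
  obtain ⟨m, hm⟩ := Ideal.exists_pow_le_of_le_radical_of_fg hJN (IsNoetherian.noetherian J)
  obtain ⟨c, hc⟩ := Ideal.exists_pow_inf_eq_pow_smul J N
  refine ⟨m + c, fun n hn ↦ disjoint_iff_inf_le.mpr ?_⟩
  calc J ^ n • ⊤ ⊓ N = J ^ (n - c) • (J ^ c • ⊤ ⊓ N) := hc n (by lia)
    _ ≤ N.annihilator • N :=
      Submodule.smul_mono ((Ideal.pow_le_pow_right (by lia)).trans hm) inf_le_right
    _ = ⊥ := N.annihilator_smul

end Module

section Localization

variable {A B : Type*} [CommRing A] [CommRing B] [Algebra A B] [FaithfulSMul A B]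
  {M : Submonoid A}

theorem isLocalization_of_forall_exists_smul_mem_range (C : Type*) [CommRing C] [Algebra A C]
    [Algebra B C] [IsScalarTower A B C] [IsLocalization (Algebra.algebraMapSubmonoid B M) C]
    (h : ∀ b : B, ∃ m ∈ M, m • b ∈ (algebraMap A B).range) : IsLocalization M C := by
  refine (isLocalization_iff M C).mpr ⟨fun m ↦ ?_, fun z ↦ ?_, fun {a a'} haa' ↦ ?_⟩
  · rw [IsScalarTower.algebraMap_apply A B C]
    exact IsLocalization.map_units C
      (⟨_, Algebra.mem_algebraMapSubmonoid_of_mem m⟩ : Algebra.algebraMapSubmonoid B M)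
  · obtain ⟨⟨b, ⟨_, s, hs, rfl⟩⟩, hz⟩ :=
      IsLocalization.surj (Algebra.algebraMapSubmonoid B M) z
    obtain ⟨m, hm, a, ha⟩ := h b
    refine ⟨(a, ⟨m * s, mul_mem hm hs⟩), ?_⟩
    calc z * algebraMap A C (m * s)
        = algebraMap A C m * (z * algebraMap B C (algebraMap A B s)) := by
          rw [map_mul, mul_left_comm, IsScalarTower.algebraMap_apply A B C s]
      _ = algebraMap A C a := by
          rw [hz, IsScalarTower.algebraMap_apply A B C a, ha, Algebra.smul_def, map_mul,
            ← IsScalarTower.algebraMap_apply]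
  · rw [IsScalarTower.algebraMap_apply A B C, IsScalarTower.algebraMap_apply A B C a'] at haa'
    obtain ⟨⟨_, m, hm, rfl⟩, hmul⟩ :=
      IsLocalization.exists_of_eq (M := Algebra.algebraMapSubmonoid B M) haa'
    refine ⟨⟨m, hm⟩, FaithfulSMul.algebraMap_injective A B ?_⟩
    simpa only [map_mul] using hmul

end Localization

section KaehlerDifferential

variable {R A B : Type*} [CommRing R] [CommRing A] [CommRing B] [Algebra R A] [Algebra R B]
  [Algebra A B] [IsScalarTower R A B]

theorem kaehlerDifferential_map_map (C : Type*) [CommRing C] [Algebra R C] [Algebra A C]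
    [Algebra B C] [IsScalarTower R A C] [IsScalarTower R B C] [IsScalarTower A B C]
    (x : Ω[A⁄R]) :
    KaehlerDifferential.map R R B C (KaehlerDifferential.map R R A B x) =
      KaehlerDifferential.map R R A C x := by
  have hcomp : (KaehlerDifferential.map R R B C).restrictScalars A ∘ₗ
      KaehlerDifferential.map R R A B = KaehlerDifferential.map R R A C := by
    apply Derivation.liftKaehlerDifferential_unique
    ext a
    simp [← IsScalarTower.algebraMap_apply A B C]
  exact LinearMap.congr_fun hcomp x

theorem exists_smul_eq_zero_of_kaehlerDifferential_map_eq_zero [FaithfulSMul A B]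
    {M : Submonoid A} (h : ∀ b : B, ∃ m ∈ M, m • b ∈ (algebraMap A B).range) {x : Ω[A⁄R]}
    (hx : KaehlerDifferential.map R R A B x = 0) : ∃ m ∈ M, m • x = 0 := by
  let C := Localization (Algebra.algebraMapSubmonoid B M)
  have : IsLocalization M C := isLocalization_of_forall_exists_smul_mem_range C h
  have hxC : x ∈ LinearMap.ker (KaehlerDifferential.map R R A C) := by
    rw [LinearMap.mem_ker, ← kaehlerDifferential_map_map (B := B), hx, map_zero]
  exact (IsLocalizedModule.mem_ker_iff M).mp hxC

theorem comap_le_radical_annihilator_ker_kaehlerDifferential_map [FaithfulSMul A B]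
    [Module.Finite A (LinearMap.ker (KaehlerDifferential.map R R A B))]
    {I : Ideal B} (hI : ∀ x ∈ I, x ∈ (algebraMap A B).range) :
    I.comap (algebraMap A B) ≤
      (LinearMap.ker (KaehlerDifferential.map R R A B)).annihilator.radical := by
  intro f hf
  have hfB (b : B) : ∃ m ∈ Submonoid.powers f, m • b ∈ (algebraMap A B).range :=
    ⟨f, Submonoid.mem_powers f, hI _ (Algebra.smul_def f b ▸ I.mul_mem_right b hf)⟩
  refine mem_radical_annihilator_iff.mpr fun ⟨x, hx⟩ ↦ ?_
  obtain ⟨_, ⟨n, rfl⟩, hn⟩ := exists_smul_eq_zero_of_kaehlerDifferential_map_eq_zero hfB hx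
  exact ⟨n, Subtype.ext hn⟩

end KaehlerDifferential

theorem stmt2_general (R A B : Type*) [CommRing R] [CommRing A] [CommRing B] [Algebra R A]
    [Algebra R B] [Algebra A B] [IsScalarTower R A B] [IsNoetherianRing A]
    [Module.Finite A Ω[A⁄R]] [FaithfulSMul A B]
    (I : Ideal B) (hI : ∀ x ∈ I, x ∈ (algebraMap A B).range) :
    ∃ N : ℕ, ∀ n ≥ N,
      ∀ x ∈ (I.comap (algebraMap A B)) ^ n • (⊤ : Submodule A (Ω[A⁄R])),
        KaehlerDifferential.map R R A B x = 0 → x = 0 := by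
  obtain ⟨N, hN⟩ := exists_forall_ge_disjoint_pow_smul_top
    (comap_le_radical_annihilator_ker_kaehlerDifferential_map (R := R) hI)
  exact ⟨N, fun n hn x hx hx0 ↦ Submodule.disjoint_def.mp (hN n hn) x hx hx0⟩

/-- With `A` reduced essentially of finite type over a field `k`, `B` its
normalization and `I` a conducting ideal, for all sufficiently large `n` the natural map
`Iⁿ·Ω¹_{A/k} → Iⁿ·Ω¹_{B/k}` induced by `Ω¹_{A/k} → Ω¹_{B/k}` is injective, i.e. the map
`Ω¹_{A/k} → Ω¹_{B/k}` is injective on the submodule `Iⁿ·Ω¹_{A/k}`. -/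
theorem stmt2 (k A B : Type*) [Field k]
    [CommRing A] [IsReduced A] [CommRing B]
    [Algebra k A] [Algebra k B] [Algebra A B] [IsScalarTower k A B]
    [Algebra.EssFiniteType k A]
    [Algebra B (FractionRing A)] [IsScalarTower A B (FractionRing A)]
    [IsIntegralClosure B A (FractionRing A)]
    (I : Ideal B) (hI : ∀ x ∈ I, x ∈ (algebraMap A B).range) :
    ∃ N : ℕ, ∀ n ≥ N,
      ∀ x ∈ (I.comap (algebraMap A B)) ^ n • (⊤ : Submodule A (Ω[A⁄k])),
        KaehlerDifferential.map k k A B x = 0 → x = 0 := by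
  have : IsNoetherianRing A := Algebra.EssFiniteType.isNoetherianRing k A
  have : FaithfulSMul A B := .tower_bot A B (FractionRing A)
  exact stmt2_general k A B I hI
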